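/- Let δt > 0 and ξ, ξ' ∈ ℝ, and let u, u', ũ, λ, λ' : S → ℝ satisfy, for every z ∈ S: u'(z) − ũ(z) = (2δt/3)(λ'(z) + ξ' − λ(z) − ξ); u(z) ≥ 0, u'(z) ≥ 0, λ(z) ≥ 0, λ'(z) ≥ 0; u(z)·λ(z) = 0 and u'(z)·λ'(z) = 0. If additionally [u', 1] = [u, 1], then 4[u' − u, ũ − u'] = (8δt/3)([u', λ] + [u, λ']) ≥ 0. -/

import Mathlib

open Finset

/-!
Conservation of mass makes `u' − u` orthogonal to constants, so the scalar multipliers drop out of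
`[u' − u, ũ − u']`. Complementarity removes the two terms `[u, λ]` and `[u', λ']` pairing quantities
of the same time level, and what survives pairs nonnegative functions of different levels.
-/

section DiscreteInner

variable {S R : Type*} [Fintype S] [CommRing R]

/-- The discrete inner product `[u, v] = ∑ z, w z * u z * v z` with quadrature weights `w`, as a
bilinear form so that its bilinearity is available through `map_add`, `map_sub` and `map_smul`. -/
def discreteInner (w : S → R) : LinearMap.BilinForm R (S → R) :=
  dotProductBilin R R ∘ₗ LinearMap.mulLeft R w

lemma discreteInner_apply (w u v : S → R) : discreteInner w u v = ∑ z, w z * u z * v z :=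
  rfl

lemma discreteInner_eq_zero_of_mul_eq_zero (w : S → R) {u v : S → R} (h : ∀ z, u z * v z = 0) :
    discreteInner w u v = 0 := by
  simp [discreteInner_apply, mul_assoc, h]

lemma discreteInner_nonneg [PartialOrder R] [IsOrderedRing R] {w u v : S → R}
    (hw : ∀ z, 0 ≤ w z) (hu : ∀ z, 0 ≤ u z) (hv : ∀ z, 0 ≤ v z) : 0 ≤ discreteInner w u v :=
  sum_nonneg fun z _ ↦ mul_nonneg (mul_nonneg (hw z) (hu z)) (hv z)

lemma discreteInner_sub_add_smul_one {w u u' : S → R}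
    (hmass : discreteInner w u' 1 = discreteInner w u 1) (f : S → R) (a : R) :
    discreteInner w (u' - u) (f + a • 1) = discreteInner w (u' - u) f := by
  simp only [map_add, map_smul, map_sub, LinearMap.sub_apply, hmass, sub_self, smul_zero, add_zero]

lemma discreteInner_sub_sub_of_complementary (w : S → R) {u u' lam lam' : S → R}
    (hcomp : ∀ z, u z * lam z = 0) (hcomp' : ∀ z, u' z * lam' z = 0) :
    discreteInner w (u' - u) (lam - lam') = discreteInner w u' lam + discreteInner w u lam' := by
  simp only [map_sub, LinearMap.sub_apply, discreteInner_eq_zero_of_mul_eq_zero w hcomp,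
    discreteInner_eq_zero_of_mul_eq_zero w hcomp']
  ring

lemma discreteInner_sub_sub_of_multiplier_step {w u u' ut lam lam' : S → R} {c ξ ξ' : R}
    (hstep : ∀ z, u' z - ut z = c * (lam' z + ξ' - lam z - ξ))
    (hcomp : ∀ z, u z * lam z = 0) (hcomp' : ∀ z, u' z * lam' z = 0)
    (hmass : discreteInner w u' 1 = discreteInner w u 1) :
    discreteInner w (u' - u) (ut - u')
      = c * (discreteInner w u' lam + discreteInner w u lam') := by
  have hcorr : ut - u' = c • ((lam - lam') + (ξ - ξ') • 1) := by
    ext z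
    simp only [Pi.sub_apply, Pi.add_apply, Pi.smul_apply, Pi.one_apply, smul_eq_mul]
    linear_combination -hstep z
  rw [hcorr, map_smul, smul_eq_mul, discreteInner_sub_add_smul_one hmass,
    discreteInner_sub_sub_of_complementary w hcomp hcomp']

end DiscreteInner

theorem bdf2_mass_cross_term_nonneg_general
    {S R : Type*} [Fintype S] [CommRing R] [PartialOrder R] [IsOrderedRing R]
    {w u u' ut lam lam' : S → R} {c ξ ξ' : R} (hw : ∀ z, 0 ≤ w z) (hc : 0 ≤ c)
    (hstep : ∀ z, u' z - ut z = c * (lam' z + ξ' - lam z - ξ))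
    (hu : ∀ z, 0 ≤ u z) (hu' : ∀ z, 0 ≤ u' z)
    (hlam : ∀ z, 0 ≤ lam z) (hlam' : ∀ z, 0 ≤ lam' z)
    (hcomp : ∀ z, u z * lam z = 0) (hcomp' : ∀ z, u' z * lam' z = 0)
    (hmass : discreteInner w u' 1 = discreteInner w u 1) :
    discreteInner w (u' - u) (ut - u')
      = c * (discreteInner w u' lam + discreteInner w u lam') ∧
    0 ≤ discreteInner w (u' - u) (ut - u') := by
  have heq := discreteInner_sub_sub_of_multiplier_step hstep hcomp hcomp' hmass
  refine ⟨heq, heq ▸ mul_nonneg hc (add_nonneg ?_ ?_)⟩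
  · exact discreteInner_nonneg hw hu' hlam
  · exact discreteInner_nonneg hw hu hlam'

/-- Cross-term positivity estimate (equation (3.28)) in the proof of Theorem
3.4: with `u, lam, ξ` the corrected solution, pointwise multiplier and scalar
mass multiplier at level `n`, and `u', lam', ξ'` those at level `n+1`, with
`ut = ũ` the BDF2 predictor, if `u' − ũ = (2δt/3)(λ' + ξ' − λ − ξ)` pointwise,
the KKT conditions hold at both levels and the discrete mass is conserved
(`[u', 1] = [u, 1]`), then
`4[u' − u, ũ − u'] = (8δt/3)([u', λ] + [u, λ']) ≥ 0`. -/
theorem bdf2_mass_cross_term_nonneg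
    {S : Type*} [Fintype S] [Nonempty S] (w : S → ℝ) (hw : ∀ z, 0 < w z)
    (δt : ℝ) (hδt : 0 < δt) (ξ ξ' : ℝ)
    (u u' ut lam lam' : S → ℝ)
    (hstep : ∀ z, u' z - ut z = (2 * δt / 3) * (lam' z + ξ' - lam z - ξ))
    (hu : ∀ z, 0 ≤ u z) (hu' : ∀ z, 0 ≤ u' z)
    (hlam : ∀ z, 0 ≤ lam z) (hlam' : ∀ z, 0 ≤ lam' z)
    (hcomp : ∀ z, u z * lam z = 0) (hcomp' : ∀ z, u' z * lam' z = 0)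
    (hmass : (∑ z, w z * u' z * 1) = ∑ z, w z * u z * 1) :
    4 * (∑ z, w z * (u' z - u z) * (ut z - u' z))
      = (8 * δt / 3) * ((∑ z, w z * u' z * lam z) + (∑ z, w z * u z * lam' z)) ∧
    0 ≤ 4 * (∑ z, w z * (u' z - u z) * (ut z - u' z)) := by
  obtain ⟨heq, hnonneg⟩ := bdf2_mass_cross_term_nonneg_general (fun z ↦ (hw z).le)
    (by positivity : 0 ≤ 2 * δt / 3) hstep hu hu' hlam hlam' hcomp hcomp' hmass
  simp only [discreteInner_apply, Pi.sub_apply] at heq hnonneg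
  exact ⟨by linear_combination 4 * heq, mul_nonneg zero_le_four hnonneg⟩
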